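/- Let x ∈ {0,1}^ℕ be a Sturmian word, i.e., p_x(n) = n + 1 for every n ≥ 0. Then there exist languages S, T ⊆ {0,1}* with p_S(n) = p_T(n) = 1 for every n ≥ 0 such that Fac(x) ⊆ S T (the set of concatenations s t with s ∈ S, t ∈ T). Consequently d_0(x) = 2. -/

import Mathlib

open scoped ENNReal Pointwise

universe u

variable {A : Type u}

/-- The factor of `x` of length `n` starting at position `i`. -/
def wordSeg (x : ℕ → A) (i n : ℕ) : List A := (List.range n).map fun j => x (i + j)

/-- The set of finite factors of a one-sided infinite word (including the empty word). -/
def Fac (x : ℕ → A) : Set (List A) := {u | ∃ i n, u = wordSeg x i n}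

/-- The factor of a two-sided word `x` of length `n` starting at position `i`. -/
def wordSegZ (x : ℤ → A) (i : ℤ) (n : ℕ) : List A := (List.range n).map fun j => x (i + j)

/-- The set of finite factors of a two-sided infinite word (including the empty word). -/
def FacZ (x : ℤ → A) : Set (List A) := {u | ∃ (i : ℤ) (n : ℕ), u = wordSegZ x i n}

/-- The complexity of a language: the number of words of length `n` in it. -/
noncomputable def complexity (L : Set (List A)) (n : ℕ) : ℕ :=
  {u ∈ L | u.length = n}.ncard

/-- The accumulative complexity `p*_L(n) = Σ_{i=0}^{n} p_L(i)`. -/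
noncomputable def accComplexity (L : Set (List A)) (n : ℕ) : ℕ :=
  ∑ i ∈ Finset.range (n + 1), complexity L i

/-- Concatenation (product) of two languages. -/
def prodL (S T : Set (List A)) : Set (List A) := {w | ∃ s ∈ S, ∃ t ∈ T, w = s ++ t}

/-- `powL S k` = `S^k`, the set of concatenations of `k` elements of `S`. -/
def powL (S : Set (List A)) : ℕ → Set (List A)
  | 0 => {([] : List A)}
  | k + 1 => prodL (powL S k) S

/-- `f(n) = O(n^α)`. -/
def PolyBound (f : ℕ → ℕ) (α : ℝ) : Prop :=
  ∃ C : ℝ, ∀ n : ℕ, 1 ≤ n → (f n : ℝ) ≤ C * (n : ℝ) ^ α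

/-- The `α`-dimension `d_α(L)`: infimum of the integers `k ≥ 1` such that `L ⊆ S^k`
for some language `S` with `p_S(n) = O(n^α)`, with `inf ∅ = ⊤`. -/
noncomputable def polyDim (α : ℝ) (L : Set (List A)) : ℕ∞ :=
  sInf {k : ℕ∞ | ∃ m : ℕ, k = m ∧ 1 ≤ m ∧
    ∃ S : Set (List A), PolyBound (complexity S) α ∧ L ⊆ powL S m}

/-- The accumulative `α`-dimension `d*_α(L)`. -/
noncomputable def polyDimStar (α : ℝ) (L : Set (List A)) : ℕ∞ :=
  sInf {k : ℕ∞ | ∃ m : ℕ, k = m ∧ 1 ≤ m ∧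
    ∃ S : Set (List A), PolyBound (accComplexity S) α ∧ L ⊆ powL S m}

/-- The cost `c(L)`: infimum of the `α ≥ 0` with `d_α(L) < +∞`, with `inf ∅ = ⊤`. -/
noncomputable def cost (L : Set (List A)) : ℝ≥0∞ :=
  sInf {a : ℝ≥0∞ | ∃ α : ℝ, 0 ≤ α ∧ a = ENNReal.ofReal α ∧ polyDim α L ≠ ⊤}

/-- A one-sided word is ultimately periodic if it is of the form `u v v v ⋯`. -/
def UltimatelyPeriodic (x : ℕ → A) : Prop :=
  ∃ N p : ℕ, 0 < p ∧ ∀ n : ℕ, N ≤ n → x (n + p) = x n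

/-- A two-sided word is eventually periodic if it is periodic far enough to the right
and far enough to the left. -/
def EventuallyPeriodicZ (x : ℤ → A) : Prop :=
  (∃ p : ℕ, 0 < p ∧ ∃ N : ℤ, ∀ n : ℤ, N ≤ n → x (n + p) = x n) ∧
  (∃ p : ℕ, 0 < p ∧ ∃ N : ℤ, ∀ n : ℤ, n ≤ N → x (n - p) = x n)

/-- A one-sided word is recurrent if each of its factors occurs infinitely often. -/
def Recurrent (x : ℕ → A) : Prop :=
  ∀ u ∈ Fac x, ∀ N : ℕ, ∃ i : ℕ, N ≤ i ∧ u = wordSeg x i u.length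

/-- `u` is a right special factor for the language `F`. -/
def RightSpecial (F : Set (List A)) (u : List A) : Prop :=
  u ∈ F ∧ ∃ a b : A, a ≠ b ∧ u ++ [a] ∈ F ∧ u ++ [b] ∈ F

/-- `M` is a `D`-marker set for a word with factor set `F`: every factor of length
at least `D n` contains a factor of length `n` belonging to `M`. -/
def MarkerSet (D : ℕ) (M F : Set (List A)) : Prop :=
  ∀ n : ℕ, 1 ≤ n → ∀ u ∈ F, D * n ≤ u.length →
    ∃ v ∈ M, v.length = n ∧ v <:+: u

/-- A language is factorial if it contains all factors of its members. -/
def IsFactorial (S : Set (List A)) : Prop := ∀ u ∈ S, ∀ v : List A, v <:+: u → v ∈ S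

/-- The bound `Σ_{k ∈ I_n ∩ ℕ} p_M(2^k)(1 + 4 p(3n)/2^k)` where
`I_n = (log₂(n/(2D)), log₂(2n)]`, i.e. the sum is over natural `k` with
`n/(2D) < 2^k ≤ 2n`. -/
noncomputable def markerBound (M F : Set (List A)) (D n : ℕ) : ℝ :=
  ∑ k ∈ (Finset.range (2 * n + 2)).filter (fun k => n < 2 * D * 2 ^ k ∧ 2 ^ k ≤ 2 * n),
    (complexity M (2 ^ k) : ℝ) * (1 + 4 * (complexity F (3 * n) : ℝ) / 2 ^ k)

-- The word `u = ∏_{i=1}^{∞} a b^i = a b a b b a b b b ⋯` over `{a,b}`, with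
-- `a = false`, `b = true`: position `n` carries an `a` iff `n = (i-1)(i+2)/2` for some
-- `i ≥ 1`, i.e. iff `2n = m(m+3)` for some `m ≥ 0`.
open Classical in
noncomputable def uWord (n : ℕ) : Bool :=
  if ∃ m : ℕ, 2 * n = m * (m + 3) then false else true

/-!
In a Sturmian language there is exactly one right special and exactly one left special factor of
each length. The right special factors are the suffixes of a left-infinite word `⋯ r₂ r₁`, the left
special ones the prefixes of a right-infinite word `l₁ l₂ ⋯`. Let `r₀` and `l₀` be the two letters
and consider `⋯ r₂ r₁ r₀ | l₀ l₁ l₂ ⋯`. We show by induction on `n` that the `n + 1` windows of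
length `n` of this word that touch the bar are pairwise distinct factors, hence all the factors of
length `n`. So every factor is a suffix of the left half followed by a prefix of the right half.

In terms of Rauzy graphs: the windows of length `n` form a Hamiltonian path of the graph of order
`n`, running from a successor of the right special vertex to a predecessor of the left special one.
Adding these two extremal edges gives a path through all vertices of the graph of order `n + 1`.
The only obstruction is a right special vertex at which two consecutive edges do not compose, but
then the initial part of the path up to it would be closed under successors, against the recurrence
of `x`.
-/

lemma exists_unique_not_injective_fiber {α β : Type*} {s : Set α} (hs : s.Finite) (f : α → β)
    (h : s.ncard = (f '' s).ncard + 1) :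
    ∃! b, ∃ a ∈ s, ∃ a' ∈ s, a ≠ a' ∧ f a = b ∧ f a' = b := by
  obtain ⟨a, ha, a', ha', hf, hne⟩ : ∃ a ∈ s, ∃ a' ∈ s, f a = f a' ∧ a ≠ a' := by
    by_contra! hinj
    have := (show Set.InjOn f s from fun a ha a' ha' => hinj a ha a' ha').ncard_image
    omega
  refine ⟨f a, ⟨a, ha, a', ha', hne, rfl, hf.symm⟩, ?_⟩
  rintro _ ⟨c, hc, c', hc', hne', rfl, hfc⟩
  by_contra hfne
  have himage : f '' (s \ {a}) = f '' s := by
    refine (Set.image_mono Set.sdiff_subset).antisymm ?_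
    rintro _ ⟨d, hd, rfl⟩
    by_cases hda : d = a
    · exact ⟨a', ⟨ha', hne.symm⟩, by rw [hda, hf]⟩
    · exact ⟨d, ⟨hd, hda⟩, rfl⟩
  have hinj : Set.InjOn f (s \ {a}) := by
    refine Set.injOn_of_ncard_image_eq ?_ (hs.subset Set.sdiff_subset)
    rw [himage, Set.ncard_sdiff_singleton_of_mem ha, h, Nat.add_sub_cancel]
  refine hne' (hinj ⟨hc, ?_⟩ ⟨hc', ?_⟩ hfc.symm)
  · rintro rfl
    exact hfne rfl
  · rintro rfl
    exact hfne hfc.symm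

/-! ### Factors of an infinite word -/

section Factors

variable {x : ℕ → A} {u v : List A} {a b : A}

@[simp]
lemma length_wordSeg (x : ℕ → A) (i n : ℕ) : (wordSeg x i n).length = n := by
  simp [wordSeg]

lemma wordSeg_add (x : ℕ → A) (i m n : ℕ) :
    wordSeg x i (m + n) = wordSeg x i m ++ wordSeg x (i + m) n := by
  simp [wordSeg, List.range_add, Function.comp_def, add_assoc]

@[simp]
lemma wordSeg_zero (x : ℕ → A) (i : ℕ) : wordSeg x i 0 = [] := rfl

@[simp]
lemma wordSeg_one (x : ℕ → A) (i : ℕ) : wordSeg x i 1 = [x i] := rfl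

lemma wordSeg_succ (x : ℕ → A) (i n : ℕ) :
    wordSeg x i (n + 1) = wordSeg x i n ++ [x (i + n)] :=
  wordSeg_add x i n 1

lemma wordSeg_succ' (x : ℕ → A) (i n : ℕ) :
    wordSeg x i (n + 1) = x i :: wordSeg x (i + 1) n := by
  rw [add_comm n 1, wordSeg_add, wordSeg_one, List.singleton_append]

lemma wordSeg_comp_add (x : ℕ → A) (N i n : ℕ) :
    wordSeg (fun k => x (N + k)) i n = wordSeg x (N + i) n := by
  simp [wordSeg, add_assoc]

lemma wordSeg_mem_Fac (x : ℕ → A) (i n : ℕ) : wordSeg x i n ∈ Fac x := ⟨i, n, rfl⟩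

lemma setOf_mem_Fac_length_eq (x : ℕ → A) (n : ℕ) :
    {u ∈ Fac x | u.length = n} = Set.range fun i => wordSeg x i n := by
  ext u
  constructor
  · rintro ⟨⟨i, m, rfl⟩, rfl⟩
    exact ⟨i, by rw [length_wordSeg]⟩
  · rintro ⟨i, rfl⟩
    exact ⟨wordSeg_mem_Fac x i n, length_wordSeg x i n⟩

lemma exists_wordSeg_eq_of_mem_Fac (h : u ∈ Fac x) : ∃ i, wordSeg x i u.length = u := by
  obtain ⟨i, n, rfl⟩ := h
  exact ⟨i, by rw [length_wordSeg]⟩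

lemma isFactorial_Fac (x : ℕ → A) : IsFactorial (Fac x) := by
  rintro u hu v ⟨s, t, rfl⟩
  obtain ⟨i, hi⟩ := exists_wordSeg_eq_of_mem_Fac hu
  rw [List.length_append, List.length_append, wordSeg_add, wordSeg_add] at hi
  have hsv := List.append_inj_left hi (by simp)
  rw [← List.append_inj_right hsv (by simp)]
  exact wordSeg_mem_Fac x _ _

lemma mem_Fac_of_cons (h : a :: u ∈ Fac x) : u ∈ Fac x :=
  isFactorial_Fac x _ h _ (List.suffix_cons a u).isInfix

lemma mem_Fac_of_concat (h : u ++ [a] ∈ Fac x) : u ∈ Fac x :=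
  isFactorial_Fac x _ h _ (List.prefix_append u [a]).isInfix

lemma mem_range_of_mem_Fac (h : u ∈ Fac x) (ha : a ∈ u) : a ∈ Set.range x := by
  obtain ⟨i, n, rfl⟩ := h
  obtain ⟨j, -, rfl⟩ := List.mem_map.1 ha
  exact ⟨i + j, rfl⟩

lemma exists_concat_mem_Fac (h : u ∈ Fac x) : ∃ a, u ++ [a] ∈ Fac x := by
  obtain ⟨i, n, rfl⟩ := h
  exact ⟨x (i + n), wordSeg_succ x i n ▸ wordSeg_mem_Fac x i (n + 1)⟩

/- This is the strong connectedness of the Rauzy graphs of `x`. -/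
lemma Recurrent.induction_on_shift (hx : Recurrent x) {P : List A → Prop}
    (hP : ∀ a w b, P (a :: w) → a :: (w ++ [b]) ∈ Fac x → P (w ++ [b]))
    (hu : u ∈ Fac x) (hPu : P u) (hv : v ∈ Fac x) (hlen : v.length = u.length) : P v := by
  obtain ⟨i, n, rfl⟩ := hu
  have hshift : ∀ k, P (wordSeg x (i + k) n) := by
    intro k
    induction k with
    | zero => exact hPu
    | succ k ih =>
      cases n with
      | zero => exact ih
      | succ n =>
        rw [wordSeg_succ'] at ih
        rw [← add_assoc, wordSeg_succ]
        refine hP _ _ _ ih ?_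
        rw [← wordSeg_succ, ← wordSeg_succ']
        exact wordSeg_mem_Fac x _ _
  obtain ⟨j, hj, hvj⟩ := hx v hv i
  obtain ⟨k, rfl⟩ := Nat.exists_eq_add_of_le hj
  rw [hvj, hlen, length_wordSeg]
  exact hshift k

lemma exists_wordSeg_eq_of_dropLast_eq (a : A) {W : ℕ → List A} (hlen : ∀ n, (W n).length = n)
    (hW : ∀ n, (W (n + 1)).dropLast = W n) :
    ∃ y : ℕ → A, y 0 = a ∧ ∀ n, wordSeg y 1 n = W n := by
  have hne (n : ℕ) : W (n + 1) ≠ [] := List.ne_nil_of_length_eq_add_one (hlen (n + 1))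
  refine ⟨fun n => n.casesOn a fun k => (W (k + 1)).getLast (hne k), rfl, fun n => ?_⟩
  induction n with
  | zero => exact (List.length_eq_zero_iff.1 (hlen 0)).symm
  | succ n ih =>
    rw [wordSeg_succ, ih, ← List.dropLast_append_getLast (hne n), hW, add_comm 1 n]

end Factors

/-! ### Complexity -/

section Complexity

lemma complexity_mono [Finite A] {L M : Set (List A)} (h : L ⊆ M) (n : ℕ) :
    complexity L n ≤ complexity M n :=
  Set.ncard_le_ncard (fun _ hu => ⟨h hu.1, hu.2⟩)
    ((List.finite_length_eq A n).subset fun _ hu => hu.2)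

lemma complexity_union_le (S T : Set (List A)) (n : ℕ) :
    complexity (S ∪ T) n ≤ complexity S n + complexity T n := by
  have : {u ∈ S ∪ T | u.length = n} = {u ∈ S | u.length = n} ∪ {u ∈ T | u.length = n} := by
    ext u
    simp [or_and_right]
  rw [complexity, this]
  exact Set.ncard_union_le _ _

lemma complexity_range_eq_one {f : ℕ → List A} (hf : ∀ n, (f n).length = n) (n : ℕ) :
    complexity (Set.range f) n = 1 := by
  refine Set.ncard_eq_one.2 ⟨f n, ?_⟩
  ext u
  constructor
  · rintro ⟨⟨k, rfl⟩, hk⟩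
    rw [← hk, hf, Set.mem_singleton_iff]
  · rintro rfl
    exact ⟨⟨n, rfl⟩, hf n⟩

lemma complexity_Fac (x : ℕ → A) (n : ℕ) :
    complexity (Fac x) n = (Set.range fun i => wordSeg x i n).ncard := by
  rw [complexity, setOf_mem_Fac_length_eq]

lemma finite_range_wordSeg [Finite A] (x : ℕ → A) (n : ℕ) :
    (Set.range fun i => wordSeg x i n).Finite :=
  (List.finite_length_eq A n).subset (Set.range_subset_iff.2 fun i => length_wordSeg x i n)

lemma image_dropLast_range_wordSeg (x : ℕ → A) (n : ℕ) :
    List.dropLast '' (Set.range fun i => wordSeg x i (n + 1)) =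
      Set.range fun i => wordSeg x i n := by
  simp only [← Set.range_comp, Function.comp_def, wordSeg_succ, List.dropLast_concat]

lemma Recurrent.image_tail_range_wordSeg {x : ℕ → A} (hx : Recurrent x) (n : ℕ) :
    List.tail '' (Set.range fun i => wordSeg x i (n + 1)) = Set.range fun i => wordSeg x i n := by
  simp only [← Set.range_comp, Function.comp_def, wordSeg_succ', List.tail_cons]
  refine (Set.range_comp_subset_range (· + 1) fun i => wordSeg x i n).antisymm ?_
  rintro _ ⟨i, rfl⟩
  obtain ⟨j, hj, hij⟩ := hx _ (wordSeg_mem_Fac x i n) 1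
  obtain ⟨k, rfl⟩ := Nat.exists_eq_add_of_le' hj
  exact ⟨k, by simpa using hij.symm⟩

variable [Finite A]

lemma wordSeg_add_eq_of_complexity_succ_le {x : ℕ → A} {n : ℕ}
    (h : complexity (Fac x) (n + 1) ≤ complexity (Fac x) n) (m : ℕ) {i j : ℕ}
    (hij : wordSeg x i n = wordSeg x j n) : wordSeg x i (n + m) = wordSeg x j (n + m) := by
  have hinj : Set.InjOn List.dropLast (Set.range fun i => wordSeg x i (n + 1)) := by
    refine Set.injOn_of_ncard_image_eq ?_ (finite_range_wordSeg x _)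
    refine (Set.ncard_image_le (finite_range_wordSeg x _)).antisymm ?_
    rwa [image_dropLast_range_wordSeg, ← complexity_Fac, ← complexity_Fac]
  have hsucc {i j : ℕ} (hij : wordSeg x i n = wordSeg x j n) :
      wordSeg x i (n + 1) = wordSeg x j (n + 1) :=
    hinj ⟨i, rfl⟩ ⟨j, rfl⟩ (by simpa only [wordSeg_succ, List.dropLast_concat] using hij)
  induction m generalizing i j with
  | zero => exact hij
  | succ m ih =>
    have hcons := hsucc hij
    rw [wordSeg_succ', wordSeg_succ', List.cons.injEq] at hcons
    rw [← add_assoc, wordSeg_succ', wordSeg_succ', hcons.1, ih hcons.2]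

lemma complexity_Fac_add_le {x : ℕ → A} {n : ℕ}
    (h : complexity (Fac x) (n + 1) ≤ complexity (Fac x) n) (m : ℕ) :
    complexity (Fac x) (n + m) ≤ complexity (Fac x) n := by
  have htake (i : ℕ) : (wordSeg x i (n + m)).take n = wordSeg x i n := by
    rw [wordSeg_add, List.take_left' (length_wordSeg x i n)]
  rw [complexity_Fac, complexity_Fac]
  refine Set.ncard_le_ncard_of_injOn (List.take n) ?_ ?_ (finite_range_wordSeg x n)
  · rintro _ ⟨i, rfl⟩
    exact ⟨i, (htake i).symm⟩
  · rintro _ ⟨i, rfl⟩ _ ⟨j, rfl⟩ hij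
    simp only [htake] at hij
    exact wordSeg_add_eq_of_complexity_succ_le h m hij

lemma monotone_complexity_Fac (x : ℕ → A) : Monotone (complexity (Fac x)) := by
  refine monotone_nat_of_le_succ fun n => ?_
  rw [complexity_Fac, complexity_Fac, ← image_dropLast_range_wordSeg]
  exact Set.ncard_image_le (finite_range_wordSeg x _)

/- The Morse–Hedlund theorem. -/
lemma succ_le_complexity_Fac {x : ℕ → A} (h : ∀ C, ∃ m, C < complexity (Fac x) m) (n : ℕ) :
    n + 1 ≤ complexity (Fac x) n := by
  have hstrict : StrictMono (complexity (Fac x)) := by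
    refine strictMono_nat_of_lt_succ fun k => ?_
    by_contra! hk
    obtain ⟨m, hm⟩ := h (complexity (Fac x) k)
    have hkm := monotone_complexity_Fac x (Nat.le_add_left m k)
    exact (hm.trans_le (hkm.trans (complexity_Fac_add_le hk m))).false
  have hzero : complexity (Fac x) 0 = 1 := by
    simp [complexity_Fac]
  simpa only [hzero, add_zero] using hstrict.add_le_nat n 0

lemma complexity_Fac_le_add_comp_add (x : ℕ → A) (N n : ℕ) :
    complexity (Fac x) n ≤ N + complexity (Fac fun k => x (N + k)) n := by
  have hsub : (Set.range fun i => wordSeg x i n) ⊆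
      (fun i => wordSeg x i n) '' Set.Iio N ∪
        Set.range fun i => wordSeg (fun k => x (N + k)) i n := by
    rintro _ ⟨i, rfl⟩
    obtain hi | hi := lt_or_ge i N
    · exact Or.inl ⟨i, hi, rfl⟩
    · obtain ⟨j, rfl⟩ := Nat.exists_eq_add_of_le hi
      exact Or.inr ⟨j, wordSeg_comp_add x N j n⟩
  have hIio : ((fun i => wordSeg x i n) '' Set.Iio N).ncard ≤ N := by
    simpa [Set.ncard_eq_toFinset_card'] using
      Set.ncard_image_le (f := fun i => wordSeg x i n) (Set.finite_Iio N)
  rw [complexity_Fac, complexity_Fac]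
  calc _ ≤ _ := Set.ncard_le_ncard hsub
          (((Set.finite_Iio N).image _).union (finite_range_wordSeg _ n))
    _ ≤ _ := Set.ncard_union_le _ _
    _ ≤ _ := Nat.add_le_add_right hIio _

end Complexity

/-! ### Special factors -/

section Special

variable {F : Set (List A)} {x : ℕ → A} {u v : List A} {a b : A} {n : ℕ}

/-- `u` is a left special factor for the language `F`, the mirror image of `RightSpecial`. -/
def LeftSpecial (F : Set (List A)) (u : List A) : Prop :=
  u ∈ F ∧ ∃ a b : A, a ≠ b ∧ a :: u ∈ F ∧ b :: u ∈ F

lemma RightSpecial.of_suffix (hF : IsFactorial F) (hu : RightSpecial F u) (h : v <:+ u) :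
    RightSpecial F v := by
  obtain ⟨huF, a, b, hab, ha, hb⟩ := hu
  obtain ⟨s, rfl⟩ := h
  exact ⟨hF _ huF _ (List.suffix_append s v).isInfix, a, b, hab,
    hF _ ha _ ⟨s, [], by simp⟩, hF _ hb _ ⟨s, [], by simp⟩⟩

lemma LeftSpecial.of_prefix (hF : IsFactorial F) (hu : LeftSpecial F u) (h : v <+: u) :
    LeftSpecial F v := by
  obtain ⟨huF, a, b, hab, ha, hb⟩ := hu
  obtain ⟨s, rfl⟩ := h
  exact ⟨hF _ huF _ (List.prefix_append v s).isInfix, a, b, hab,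
    hF _ ha _ ⟨[], s, by simp⟩, hF _ hb _ ⟨[], s, by simp⟩⟩

lemma rightSpecial_Fac (hab : a ≠ b) (ha : u ++ [a] ∈ Fac x) (hb : u ++ [b] ∈ Fac x) :
    RightSpecial (Fac x) u :=
  ⟨mem_Fac_of_concat ha, a, b, hab, ha, hb⟩

lemma leftSpecial_Fac (hab : a ≠ b) (ha : a :: u ∈ Fac x) (hb : b :: u ∈ Fac x) :
    LeftSpecial (Fac x) u :=
  ⟨mem_Fac_of_cons ha, a, b, hab, ha, hb⟩

lemma cons_concat_mem_Fac_of_not_rightSpecial (ha : a :: u ∈ Fac x) (hb : u ++ [b] ∈ Fac x)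
    (hu : ¬RightSpecial (Fac x) u) : a :: (u ++ [b]) ∈ Fac x := by
  obtain ⟨c, hc⟩ := exists_concat_mem_Fac ha
  by_cases hcb : c = b
  · exact hcb ▸ hc
  · exact absurd (rightSpecial_Fac hcb (mem_Fac_of_cons hc) hb) hu

lemma RightSpecial.concat_mem_Fac (hu : RightSpecial (Fac x) u) (hx : Set.range x = {a, b}) :
    u ++ [a] ∈ Fac x ∧ u ++ [b] ∈ Fac x := by
  obtain ⟨-, c, d, hcd, hc, hd⟩ := hu
  have hc' : c ∈ ({a, b} : Set A) := hx ▸ mem_range_of_mem_Fac hc (by simp)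
  have hd' : d ∈ ({a, b} : Set A) := hx ▸ mem_range_of_mem_Fac hd (by simp)
  rcases hc' with rfl | rfl <;> rcases hd' with rfl | rfl <;> first | contradiction | tauto

lemma LeftSpecial.cons_mem_Fac (hu : LeftSpecial (Fac x) u) (hx : Set.range x = {a, b}) :
    a :: u ∈ Fac x ∧ b :: u ∈ Fac x := by
  obtain ⟨-, c, d, hcd, hc, hd⟩ := hu
  have hc' : c ∈ ({a, b} : Set A) := hx ▸ mem_range_of_mem_Fac hc (by simp)
  have hd' : d ∈ ({a, b} : Set A) := hx ▸ mem_range_of_mem_Fac hd (by simp)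
  rcases hc' with rfl | rfl <;> rcases hd' with rfl | rfl <;> first | contradiction | tauto

lemma rightSpecial_Fac_iff :
    u.length = n ∧ RightSpecial (Fac x) u ↔
      ∃ v ∈ Set.range fun i => wordSeg x i (n + 1), ∃ w ∈ Set.range fun i => wordSeg x i (n + 1),
        v ≠ w ∧ v.dropLast = u ∧ w.dropLast = u := by
  rw [← setOf_mem_Fac_length_eq]
  constructor
  · rintro ⟨rfl, -, a, b, hab, ha, hb⟩
    exact ⟨u ++ [a], ⟨ha, by simp⟩, u ++ [b], ⟨hb, by simp⟩, by simpa using hab, by simp, by simp⟩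
  · rintro ⟨v, ⟨hv, hvn⟩, w, ⟨hw, hwn⟩, hvw, rfl, hwv⟩
    rw [← List.dropLast_append_getLast (List.ne_nil_of_length_eq_add_one hvn)] at hv hvw
    rw [← List.dropLast_append_getLast (List.ne_nil_of_length_eq_add_one hwn), hwv] at hw hvw
    exact ⟨by simp [hvn], rightSpecial_Fac (by simpa using hvw) hv hw⟩

lemma leftSpecial_Fac_iff :
    u.length = n ∧ LeftSpecial (Fac x) u ↔
      ∃ v ∈ Set.range fun i => wordSeg x i (n + 1), ∃ w ∈ Set.range fun i => wordSeg x i (n + 1),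
        v ≠ w ∧ v.tail = u ∧ w.tail = u := by
  rw [← setOf_mem_Fac_length_eq]
  constructor
  · rintro ⟨rfl, -, a, b, hab, ha, hb⟩
    exact ⟨a :: u, ⟨ha, by simp⟩, b :: u, ⟨hb, by simp⟩, by simpa using hab, by simp, by simp⟩
  · rintro ⟨v, ⟨hv, hvn⟩, w, ⟨hw, hwn⟩, hvw, rfl, hwv⟩
    obtain ⟨a, v, rfl⟩ := List.exists_cons_of_length_eq_add_one hvn
    obtain ⟨b, w, rfl⟩ := List.exists_cons_of_length_eq_add_one hwn
    obtain rfl : w = v := hwv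
    exact ⟨Nat.succ.inj hvn, leftSpecial_Fac (by simpa using hvw) hv hw⟩

variable [Finite A]

lemma exists_unique_rightSpecial (h : complexity (Fac x) (n + 1) = complexity (Fac x) n + 1) :
    ∃! u, u.length = n ∧ RightSpecial (Fac x) u := by
  simp only [rightSpecial_Fac_iff]
  refine exists_unique_not_injective_fiber (finite_range_wordSeg x _) _ ?_
  rw [image_dropLast_range_wordSeg, ← complexity_Fac, ← complexity_Fac, h]

lemma Recurrent.exists_unique_leftSpecial (hx : Recurrent x)
    (h : complexity (Fac x) (n + 1) = complexity (Fac x) n + 1) :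
    ∃! u, u.length = n ∧ LeftSpecial (Fac x) u := by
  simp only [leftSpecial_Fac_iff]
  refine exists_unique_not_injective_fiber (finite_range_wordSeg x _) _ ?_
  rw [hx.image_tail_range_wordSeg, ← complexity_Fac, ← complexity_Fac, h]

end Special

/-! ### Sturmian words -/

/-- Sturmian words, over an arbitrary alphabet: the case `n = 1` of the definition says that `x`
has exactly two letters. -/
def IsSturmian (x : ℕ → A) : Prop := ∀ n, complexity (Fac x) n = n + 1

namespace IsSturmian

variable {x : ℕ → A} {u v : List A}

lemma ncard_range (hx : IsSturmian x) : (Set.range x).ncard = 2 := by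
  have h := hx 1
  simp only [complexity_Fac, wordSeg_one] at h
  rwa [Set.range_comp' (fun a => [a]) x,
    Set.ncard_image_of_injective _ List.singleton_injective] at h

variable [Finite A]

theorem recurrent (hx : IsSturmian x) : Recurrent x := by
  intro u hu N
  have hunbounded (C : ℕ) : ∃ m, C < complexity (Fac fun k => x (N + k)) m := by
    refine ⟨N + C, ?_⟩
    have := complexity_Fac_le_add_comp_add x N (N + C)
    rw [hx] at this
    omega
  have hsub : (Set.range fun i => wordSeg (fun k => x (N + k)) i u.length) ⊆
      Set.range fun i => wordSeg x i u.length := by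
    rintro _ ⟨i, rfl⟩
    exact ⟨N + i, (wordSeg_comp_add x N i _).symm⟩
  have heq := Set.eq_of_subset_of_ncard_le hsub
    (by
      rw [← complexity_Fac, ← complexity_Fac, hx]
      exact succ_le_complexity_Fac hunbounded _)
    (finite_range_wordSeg x _)
  obtain ⟨i, hi⟩ : u ∈ Set.range fun i => wordSeg (fun k => x (N + k)) i u.length :=
    heq ▸ exists_wordSeg_eq_of_mem_Fac hu
  exact ⟨N + i, Nat.le_add_right N i, hi.symm.trans (wordSeg_comp_add x N i _)⟩

lemma exists_unique_rightSpecial (hx : IsSturmian x) (n : ℕ) :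
    ∃! u, u.length = n ∧ RightSpecial (Fac x) u :=
  _root_.exists_unique_rightSpecial (by rw [hx, hx])

lemma exists_unique_leftSpecial (hx : IsSturmian x) (n : ℕ) :
    ∃! u, u.length = n ∧ LeftSpecial (Fac x) u :=
  hx.recurrent.exists_unique_leftSpecial (by rw [hx, hx])

lemma rightSpecial_unique (hx : IsSturmian x) (hu : RightSpecial (Fac x) u)
    (hv : RightSpecial (Fac x) v) (hlen : u.length = v.length) : u = v :=
  (hx.exists_unique_rightSpecial v.length).unique ⟨hlen, hu⟩ ⟨rfl, hv⟩

lemma leftSpecial_unique (hx : IsSturmian x) (hu : LeftSpecial (Fac x) u)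
    (hv : LeftSpecial (Fac x) v) (hlen : u.length = v.length) : u = v :=
  (hx.exists_unique_leftSpecial v.length).unique ⟨hlen, hu⟩ ⟨rfl, hv⟩

lemma exists_forall_rightSpecial (hx : IsSturmian x) (a : A) :
    ∃ r : ℕ → A, r 0 = a ∧ ∀ n, RightSpecial (Fac x) (wordSeg r 1 n).reverse := by
  choose R hR using fun n => (hx.exists_unique_rightSpecial n).exists
  have htail (n : ℕ) : (R (n + 1)).tail = R n :=
    hx.rightSpecial_unique ((hR (n + 1)).2.of_suffix (isFactorial_Fac x) (List.tail_suffix _))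
      (hR n).2 (by simp [hR])
  obtain ⟨r, hr₀, hr⟩ := exists_wordSeg_eq_of_dropLast_eq a (W := fun n => (R n).reverse)
    (by simp [hR]) (fun n => by rw [List.dropLast_reverse, htail])
  exact ⟨r, hr₀, fun n => by simpa only [hr, List.reverse_reverse] using (hR n).2⟩

lemma exists_forall_leftSpecial (hx : IsSturmian x) (a : A) :
    ∃ l : ℕ → A, l 0 = a ∧ ∀ n, LeftSpecial (Fac x) (wordSeg l 1 n) := by
  choose L hL using fun n => (hx.exists_unique_leftSpecial n).exists
  have hdropLast (n : ℕ) : (L (n + 1)).dropLast = L n :=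
    hx.leftSpecial_unique ((hL (n + 1)).2.of_prefix (isFactorial_Fac x) (List.dropLast_prefix _))
      (hL n).2 (by simp [hL])
  obtain ⟨l, hl₀, hl⟩ := exists_wordSeg_eq_of_dropLast_eq a (fun n => (hL n).1) hdropLast
  exact ⟨l, hl₀, fun n => by simpa only [hl] using (hL n).2⟩

end IsSturmian

/-! ### Windows around the origin of a two-sided word -/

section Window

variable {r l : ℕ → A} {k m : ℕ}

/-- The factor of the two-sided word `⋯ r₂ r₁ r₀ | l₀ l₁ l₂ ⋯` that extends `k` letters to the left
of the bar and `m` letters to the right. -/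
def window (r l : ℕ → A) (k m : ℕ) : List A := (wordSeg r 0 k).reverse ++ wordSeg l 0 m

@[simp]
lemma length_window : (window r l k m).length = k + m := by
  simp [window]

lemma window_succ_left : window r l (k + 1) m = r k :: window r l k m := by
  simp [window, wordSeg_succ]

lemma window_succ_right : window r l k (m + 1) = window r l k m ++ [l m] := by
  simp [window, wordSeg_succ]

lemma window_succ_zero : window r l (k + 1) 0 = (wordSeg r 1 k).reverse ++ [r 0] := by
  simp [wordSeg_succ', window]

lemma window_zero_succ : window r l 0 (m + 1) = l 0 :: wordSeg l 1 m := by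
  simp [wordSeg_succ', window]

/-- The windows of length `n` are factors of `x`. -/
def WindowsMem (x r l : ℕ → A) (n : ℕ) : Prop := ∀ k m, k + m = n → window r l k m ∈ Fac x

/-- The windows of length `n` are pairwise distinct. -/
def WindowsDistinct (r l : ℕ → A) (n : ℕ) : Prop :=
  ∀ ⦃k m k' m'⦄, k + m = n → k' + m' = n → window r l k m = window r l k' m' → k = k'

end Window

/-- The two-sided word `⋯ r₂ r₁ r₀ | l₀ l₁ l₂ ⋯` attached to a Sturmian word `x`: its central
letters are the two letters of `x`, preceded by the right special factors and followed by the left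
special ones. -/
structure IsSpecialSplit (x r l : ℕ → A) : Prop where
  range_eq : Set.range x = {r 0, l 0}
  ne : r 0 ≠ l 0
  rightSpecial : ∀ n, RightSpecial (Fac x) (wordSeg r 1 n).reverse
  leftSpecial : ∀ n, LeftSpecial (Fac x) (wordSeg l 1 n)

lemma IsSturmian.exists_isSpecialSplit [Finite A] {x : ℕ → A} (hx : IsSturmian x) :
    ∃ r l, IsSpecialSplit x r l := by
  obtain ⟨a, b, hab, hrange⟩ := Set.ncard_eq_two.1 hx.ncard_range
  obtain ⟨r, rfl, hr⟩ := hx.exists_forall_rightSpecial a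
  obtain ⟨l, rfl, hl⟩ := hx.exists_forall_leftSpecial b
  exact ⟨r, l, hrange, hab, hr, hl⟩

lemma IsSturmian.exists_eq_window [Finite A] {x r l : ℕ → A} (hx : IsSturmian x) {n : ℕ}
    (hmem : WindowsMem x r l n) (hdist : WindowsDistinct r l n) {u : List A} (hu : u ∈ Fac x)
    (hlen : u.length = n) : ∃ k m, k + m = n ∧ u = window r l k m := by
  let f : ℕ × ℕ → List A := fun p => window r l p.1 p.2
  let s : Set (ℕ × ℕ) := Finset.HasAntidiagonal.antidiagonal n
  have hs {p : ℕ × ℕ} : p ∈ s ↔ p.1 + p.2 = n := Finset.HasAntidiagonal.mem_antidiagonal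
  have hsub : f '' s ⊆ {u ∈ Fac x | u.length = n} := by
    rintro _ ⟨p, hp, rfl⟩
    exact ⟨hmem _ _ (hs.1 hp), length_window.trans (hs.1 hp)⟩
  have hinj : Set.InjOn f s := by
    intro p hp q hq hpq
    have := hdist (hs.1 hp) (hs.1 hq) hpq
    have := hs.1 hp
    have := hs.1 hq
    ext <;> omega
  have hcard : complexity (Fac x) n ≤ (f '' s).ncard := by
    rw [hx, hinj.ncard_image, Set.ncard_coe_finset, Finset.Nat.card_antidiagonal]
  have heq := Set.eq_of_subset_of_ncard_le hsub hcard
    ((List.finite_length_eq A n).subset fun _ hu => hu.2)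
  obtain ⟨p, hp, rfl⟩ : u ∈ f '' s := heq ▸ ⟨hu, hlen⟩
  exact ⟨p.1, p.2, hs.1 hp, rfl⟩

lemma IsSturmian.eq_of_window_concat_mem [Finite A] {x r l : ℕ → A} (hx : IsSturmian x)
    {k m i j n : ℕ} {b : A} (hdist : WindowsDistinct r l n) (hmem' : WindowsMem x r l (n + 1))
    (hspecial : RightSpecial (Fac x) (window r l k m)) (hkm : k + m = n) (hij : i + j = n)
    (hik : i ≠ k) (hb : window r l i j ++ [b] ∈ Fac x) : b = l j := by
  by_contra hne
  have hright : RightSpecial (Fac x) (window r l i j) :=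
    rightSpecial_Fac hne hb (window_succ_right (r := r) ▸ hmem' i (j + 1) (by omega))
  exact hik (hdist hij hkm (hx.rightSpecial_unique hright hspecial (by simp [hij, hkm])))

namespace IsSpecialSplit

variable {x r l : ℕ → A} {k m n : ℕ}

lemma window_succ_zero_mem (h : IsSpecialSplit x r l) (k : ℕ) : window r l (k + 1) 0 ∈ Fac x :=
  window_succ_zero (r := r) ▸ ((h.rightSpecial k).concat_mem_Fac h.range_eq).1

lemma window_zero_succ_mem (h : IsSpecialSplit x r l) (m : ℕ) : window r l 0 (m + 1) ∈ Fac x :=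
  window_zero_succ (l := l) ▸ ((h.leftSpecial m).cons_mem_Fac h.range_eq).2

lemma eq_of_ne_of_ne (h : IsSpecialSplit x r l) {a b : A} (ha : a ∈ Set.range x)
    (hb : b ∈ Set.range x) (har : a ≠ r 0) (hba : b ≠ a) : b = r 0 := by
  rw [h.range_eq] at ha hb
  obtain rfl : a = l 0 := ha.resolve_left har
  exact hb.resolve_right hba

lemma windowsMem_zero (x r l : ℕ → A) : WindowsMem x r l 0 := by
  intro k m hkm
  obtain ⟨rfl, rfl⟩ : k = 0 ∧ m = 0 := by omega
  exact wordSeg_mem_Fac x 0 0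

lemma windowsDistinct_zero (r l : ℕ → A) : WindowsDistinct r l 0 := by
  intro k m k' m' _ _ _
  omega

lemma windowsMem_one (h : IsSpecialSplit x r l) : WindowsMem x r l 1 := by
  intro k m hkm
  obtain ⟨rfl, rfl⟩ | ⟨rfl, rfl⟩ : k = 0 ∧ m = 1 ∨ k = 1 ∧ m = 0 := by omega
  · exact h.window_zero_succ_mem 0
  · exact h.window_succ_zero_mem 0

variable [Finite A]

/- If the two extremal windows agreed, the path of windows would be a cycle in the Rauzy graph, and
the second successor of the right special vertex would be a second left special one. -/
lemma window_succ_zero_ne_window_zero_succ (h : IsSpecialSplit x r l) (hx : IsSturmian x)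
    (hmem : WindowsMem x r l n) (hdist : WindowsDistinct r l n)
    (hmem' : WindowsMem x r l (n + 1)) : window r l (n + 1) 0 ≠ window r l 0 (n + 1) := by
  intro heq
  obtain _ | n := n
  · simp [window, h.ne] at heq
  have hright : (wordSeg r 1 (n + 1)).reverse = window r l 0 (n + 1) := by
    rw [window_succ_zero, window_succ_right] at heq
    exact (List.append_singleton_inj.1 heq).1
  have hleft : wordSeg l 1 (n + 1) = window r l (n + 1) 0 := by
    rw [window_zero_succ, window_succ_left] at heq
    exact (List.cons.inj heq).2.symm
  set y := (wordSeg r 1 n).reverse ++ [l 0] with hy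
  have hext : r (n + 1) :: y = (wordSeg r 1 (n + 1)).reverse ++ [l 0] := by
    simp [hy, wordSeg_succ, add_comm]
  have hext_mem : r (n + 1) :: y ∈ Fac x :=
    hext ▸ ((h.rightSpecial (n + 1)).concat_mem_Fac h.range_eq).2
  obtain ⟨k, m, hkm, hyw⟩ :=
    hx.exists_eq_window hmem hdist (mem_Fac_of_cons hext_mem) (by simp [hy])
  obtain _ | m := m
  · obtain rfl : k = n + 1 := hkm
    rw [hy, window_succ_zero] at hyw
    exact h.ne (List.append_singleton_inj.1 hyw).2.symm
  have hpred : window r l (k + 1) (m + 1) = r k :: y := by rw [window_succ_left, hyw]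
  by_cases hletter : r k = r (n + 1)
  · have : window r l (k + 1) m = window r l 0 (n + 1) := by
      rw [hletter, hext, window_succ_right, hright] at hpred
      exact (List.append_singleton_inj.1 hpred).1
    exact k.succ_ne_zero (hdist (by omega) (by omega) this)
  · have hspecial : LeftSpecial (Fac x) y :=
      leftSpecial_Fac hletter (hpred ▸ hmem' _ _ (by omega)) hext_mem
    have : window r l k (m + 1) = window r l (n + 1) 0 := by
      rw [← hyw, ← hleft]
      exact hx.leftSpecial_unique hspecial (h.leftSpecial _) (by simp [hy])
    have := hdist hkm (by omega) this
    omega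

lemma windowsDistinct_succ (h : IsSpecialSplit x r l) (hx : IsSturmian x)
    (hmem : WindowsMem x r l n) (hdist : WindowsDistinct r l n)
    (hmem' : WindowsMem x r l (n + 1)) : WindowsDistinct r l (n + 1) := by
  have hextremal := h.window_succ_zero_ne_window_zero_succ hx hmem hdist hmem'
  have hlt {k m k' m' : ℕ} (hkm : k + 1 + m = n + 1) (hkm' : k' + (m' + 1) = n + 1)
      (hk : k' < k + 1) : window r l (k + 1) m ≠ window r l k' (m' + 1) := by
    intro heq
    obtain _ | m := m
    · obtain _ | k' := k'
      · obtain rfl : k = n := by omega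
        obtain rfl : m' = k := by omega
        exact hextremal heq
      · rw [window_succ_left, window_succ_left] at heq
        have := hdist (by omega) (by omega) (List.cons.inj heq).2
        omega
    · rw [window_succ_right, window_succ_right] at heq
      have := hdist (by omega) (by omega) (List.append_singleton_inj.1 heq).1
      omega
  intro k m k' m' hkm hkm' heq
  obtain hk | hk | hk := lt_trichotomy k k'
  · obtain ⟨k', rfl⟩ := Nat.exists_eq_add_of_lt hk
    obtain ⟨m, rfl⟩ := Nat.exists_eq_add_of_lt (show m' < m by omega)
    exact absurd heq.symm (hlt (by omega) (by omega) hk)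
  · exact hk
  · obtain ⟨k, rfl⟩ := Nat.exists_eq_add_of_lt hk
    obtain ⟨m', rfl⟩ := Nat.exists_eq_add_of_lt (show m < m' by omega)
    exact absurd heq (hlt (by omega) (by omega) hk)

lemma window_concat_eq_of_rightSpecial (h : IsSpecialSplit x r l) (hx : IsSturmian x)
    (hspecial : RightSpecial (Fac x) (window r l k m)) :
    window r l k m ++ [r 0] = window r l (k + m + 1) 0 := by
  rw [window_succ_zero, hx.rightSpecial_unique hspecial (h.rightSpecial (k + m)) (by simp)]

/- Otherwise the windows extending more than `k` letters to the left are closed under successors. -/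
lemma window_succ_succ_mem_of_rightSpecial (h : IsSpecialSplit x r l) (hx : IsSturmian x)
    (hdist : WindowsDistinct r l n) (hmem' : WindowsMem x r l (n + 1))
    (hdist' : WindowsDistinct r l (n + 1)) (hkm : k + m = n)
    (hspecial : RightSpecial (Fac x) (window r l k m)) : window r l (k + 1) (m + 1) ∈ Fac x := by
  by_contra hnot
  subst hkm
  have hfirst := h.window_concat_eq_of_rightSpecial hx hspecial
  have hVlm : window r l k m ++ [l m] ∈ Fac x :=
    window_succ_right (r := r) ▸ hmem' k (m + 1) (by omega)
  have hlm : l m ≠ r 0 := by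
    intro hlm
    rw [← hlm, ← window_succ_right] at hfirst
    have := hdist' (by omega) (by omega) hfirst
    omega
  let P (u : List A) : Prop := ∃ i j, k < i ∧ i + j = k + m + 1 ∧ u = window r l i j
  have hP (a : A) (w : List A) (b : A) (haw : P (a :: w)) (hawb : a :: (w ++ [b]) ∈ Fac x) :
      P (w ++ [b]) := by
    obtain ⟨_ | i, j, hi, hij, hwindow⟩ := haw
    · omega
    rw [window_succ_left] at hwindow
    obtain ⟨rfl, rfl⟩ := List.cons.inj hwindow
    have hwb : window r l i j ++ [b] ∈ Fac x := mem_Fac_of_cons hawb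
    by_cases hik : i = k
    · obtain rfl : j = m := by omega
      subst hik
      have hbl : b ≠ l j := by
        rintro rfl
        rw [window_succ_left, window_succ_right] at hnot
        exact hnot hawb
      have hbr : b = r 0 := h.eq_of_ne_of_ne (mem_range_of_mem_Fac hVlm (by simp))
        (mem_range_of_mem_Fac hwb (by simp)) hlm hbl
      exact ⟨i + j + 1, 0, by omega, rfl, hbr ▸ hfirst⟩
    · obtain rfl : b = l j :=
        hx.eq_of_window_concat_mem hdist hmem' hspecial rfl (by omega) hik hwb
      exact ⟨i, j + 1, by omega, by omega, window_succ_right.symm⟩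
  have hstart : P (window r l (k + m + 1) 0) := ⟨k + m + 1, 0, by omega, rfl, rfl⟩
  obtain ⟨i, j, hi, hij, heq⟩ := hx.recurrent.induction_on_shift hP
    (h.window_succ_zero_mem _) hstart (hmem' k (m + 1) (by omega)) (by simp; omega)
  have := hdist' (by omega) hij heq
  omega

lemma windowsMem_add_two (h : IsSpecialSplit x r l) (hx : IsSturmian x)
    (hdist : WindowsDistinct r l n) (hmem' : WindowsMem x r l (n + 1))
    (hdist' : WindowsDistinct r l (n + 1)) : WindowsMem x r l (n + 2) := by
  rintro (_ | k) (_ | m) hkm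
  · omega
  · exact h.window_zero_succ_mem m
  · exact h.window_succ_zero_mem k
  · by_cases hspecial : RightSpecial (Fac x) (window r l k m)
    · exact h.window_succ_succ_mem_of_rightSpecial hx hdist hmem' hdist' (by omega) hspecial
    · rw [window_succ_left, window_succ_right]
      refine cons_concat_mem_Fac_of_not_rightSpecial ?_ ?_ hspecial
      · exact window_succ_left (r := r) ▸ hmem' (k + 1) m (by omega)
      · exact window_succ_right (r := r) ▸ hmem' k (m + 1) (by omega)

lemma windowsMem_and_windowsDistinct (h : IsSpecialSplit x r l) (hx : IsSturmian x) (n : ℕ) :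
    WindowsMem x r l n ∧ WindowsDistinct r l n ∧ WindowsMem x r l (n + 1) := by
  induction n with
  | zero => exact ⟨windowsMem_zero x r l, windowsDistinct_zero r l, h.windowsMem_one⟩
  | succ n ih =>
    obtain ⟨hmem, hdist, hmem'⟩ := ih
    have hdist' := h.windowsDistinct_succ hx hmem hdist hmem'
    exact ⟨hmem', hdist', h.windowsMem_add_two hx hdist hmem' hdist'⟩

end IsSpecialSplit

theorem IsSturmian.exists_Fac_subset_prodL [Finite A] {x : ℕ → A} (hx : IsSturmian x) :
    ∃ S T : Set (List A), (∀ n, complexity S n = 1) ∧ (∀ n, complexity T n = 1) ∧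
      Fac x ⊆ prodL S T := by
  obtain ⟨r, l, h⟩ := hx.exists_isSpecialSplit
  refine ⟨Set.range fun k => (wordSeg r 0 k).reverse, Set.range fun m => wordSeg l 0 m,
    complexity_range_eq_one (by simp), complexity_range_eq_one (by simp), fun u hu => ?_⟩
  obtain ⟨hmem, hdist, -⟩ := h.windowsMem_and_windowsDistinct hx u.length
  obtain ⟨k, m, -, hu⟩ := hx.exists_eq_window hmem hdist hu rfl
  exact ⟨_, ⟨k, rfl⟩, _, ⟨m, rfl⟩, hu⟩

/-! ### Dimension -/

section Dimension

variable {L S T : Set (List A)} {α : ℝ}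

lemma powL_one (S : Set (List A)) : powL S 1 = S := by
  ext u
  simp [powL, prodL]

lemma prodL_subset_powL_two (hS : S ⊆ L) (hT : T ⊆ L) : prodL S T ⊆ powL L 2 := by
  rintro _ ⟨s, hs, t, ht, rfl⟩
  have hs' : s ∈ powL L 1 := (powL_one L).ge (hS hs)
  exact ⟨s, hs', t, hT ht, rfl⟩

lemma PolyBound.mono {f g : ℕ → ℕ} (hg : PolyBound g α) (h : ∀ n, f n ≤ g n) : PolyBound f α := by
  obtain ⟨C, hC⟩ := hg
  exact ⟨C, fun n hn => (Nat.cast_le.2 (h n)).trans (hC n hn)⟩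

lemma PolyBound.add {f g : ℕ → ℕ} (hf : PolyBound f α) (hg : PolyBound g α) :
    PolyBound (fun n => f n + g n) α := by
  obtain ⟨C, hC⟩ := hf
  obtain ⟨D, hD⟩ := hg
  refine ⟨C + D, fun n hn => ?_⟩
  rw [Nat.cast_add, add_mul]
  exact add_le_add (hC n hn) (hD n hn)

lemma polyBound_zero_iff {f : ℕ → ℕ} : PolyBound f 0 ↔ ∃ C : ℕ, ∀ n, 1 ≤ n → f n ≤ C := by
  simp only [PolyBound, Real.rpow_zero, mul_one]
  constructor
  · rintro ⟨C, hC⟩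
    exact ⟨⌈C⌉₊, fun n hn => Nat.cast_le.1 ((hC n hn).trans (Nat.le_ceil C))⟩
  · rintro ⟨C, hC⟩
    exact ⟨C, fun n hn => Nat.cast_le.2 (hC n hn)⟩

lemma polyDim_le_two (hS : PolyBound (complexity S) α) (hT : PolyBound (complexity T) α)
    (h : L ⊆ prodL S T) : polyDim α L ≤ 2 :=
  sInf_le ⟨2, rfl, one_le_two, S ∪ T, (hS.add hT).mono (complexity_union_le S T),
    h.trans (prodL_subset_powL_two Set.subset_union_left Set.subset_union_right)⟩

lemma two_le_polyDim [Finite A] (h : ¬PolyBound (complexity L) α) : 2 ≤ polyDim α L := by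
  refine le_sInf ?_
  rintro _ ⟨m, rfl, hm, S, hS, hL⟩
  rw [Nat.ofNat_le_cast]
  by_contra! hm2
  obtain rfl : m = 1 := by omega
  rw [powL_one] at hL
  exact h (hS.mono (complexity_mono hL))

end Dimension

theorem IsSturmian.polyDim_zero_eq_two [Finite A] {x : ℕ → A} (hx : IsSturmian x) :
    polyDim 0 (Fac x) = 2 := by
  obtain ⟨S, T, hS, hT, hST⟩ := hx.exists_Fac_subset_prodL
  refine le_antisymm (polyDim_le_two ?_ ?_ hST) (two_le_polyDim fun hbound => ?_)
  · exact polyBound_zero_iff.2 ⟨1, fun n _ => (hS n).le⟩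
  · exact polyBound_zero_iff.2 ⟨1, fun n _ => (hT n).le⟩
  · obtain ⟨C, hC⟩ := polyBound_zero_iff.1 hbound
    have := hC (C + 1) (by omega)
    rw [hx] at this
    omega

theorem stmt1_general {A : Type*} [Finite A] (x : ℕ → A)
    (hx : ∀ n : ℕ, complexity (Fac x) n = n + 1) :
    (∃ S T : Set (List A),
      (∀ n : ℕ, complexity S n = 1) ∧ (∀ n : ℕ, complexity T n = 1) ∧
      Fac x ⊆ prodL S T) ∧
    polyDim 0 (Fac x) = 2 :=
  have hx : IsSturmian x := hx
  ⟨hx.exists_Fac_subset_prodL, hx.polyDim_zero_eq_two⟩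

/-- for a Sturmian word `x` there are languages `S, T` with exactly one
word of each length such that `Fac(x) ⊆ S T`; consequently `d₀(x) = 2`. -/
theorem stmt1 (x : ℕ → Bool) (hx : ∀ n : ℕ, complexity (Fac x) n = n + 1) :
    (∃ S T : Set (List Bool),
      (∀ n : ℕ, complexity S n = 1) ∧ (∀ n : ℕ, complexity T n = 1) ∧
      Fac x ⊆ prodL S T) ∧
    polyDim 0 (Fac x) = 2 :=
  stmt1_general x hx
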